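/- arXiv:cs/0602075 — 3 statements merged into one kernel-verified Lean document; each statement's English description precedes it below -/
import Mathlib

section
/- Let M be an n×n real matrix that is not a permuted a-Monge matrix. Then there exists a set B of indices with |B| ≤ 4 such that the principal submatrix M[B] is not a permuted a-Monge matrix. -/
/-- A square matrix indexed by a linearly ordered type is a-Monge if
`M i k + M j l ≥ M i l + M j k` whenever `i < j` and `k < l`. -/
def AMonge {ι : Type*} [LinearOrder ι] (M : ι → ι → ℝ) : Prop :=
  ∀ i j k l : ι, i < j → k < l → M i l + M j k ≤ M i k + M j l

/-- A matrix is a permuted a-Monge matrix if some permutation of its index set,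
applied simultaneously to rows and columns, makes it a-Monge. -/
def PermAMonge {ι : Type*} [LinearOrder ι] (M : ι → ι → ℝ) : Prop :=
  ∃ π : Equiv.Perm ι, AMonge (fun i j => M (π i) (π j))

/-!
Write `D(a,b;c,d) = M a c + M b d - M a d - M b c`, which is additive in the row interval and in the
column interval. Sorting `M` into a-Monge form means ranking the indices so that `D(a,b;c,d) ≥ 0`
whenever `a` is ranked at most `b` and `c` at most `d`.

Assume that all four-element principal submatrices can be ranked, and let `p, q` maximise
`D(p,q;p,q)`. In an a-Monge matrix the extreme indices are such a pair, so `p` should come first and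
`q` last, and the remaining indices have to be ranked by
`ρ x = (M q x - M p x) + (M x q - M x p)`, because `ρ y - ρ x = D(p,q;x,y) + D(x,y;p,q)`. By
maximality, two indices which a ranking of `{p, q, x, y}` orders differently from `ρ` are not
separated by any `D`, so `ρ` ranks every `{p, q, x, y}`.

By additivity, `ρ` ranks everything once `D(x,y;y,z)`, `D(x,y;z,w)` and their transposes are
nonnegative for `x, y, z, w` in increasing order. If `D(x,y;y,z) < 0`, then a ranking of
`{p, x, y, z}` forces `D(x,y;x,y) = 0`, and symmetrically one of `{q, x, y, z}` forces
`D(y,z;y,z) = 0`; since a ranking of `{x, y, z}` gives `D(y,z;x,y) ≤ 0`, this would make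
`D(x,z;x,z)` negative. If `D(x,y;z,w) < 0`, then `D(x,y;y,z)` and `D(y,z;z,w)` are positive, so any
ranking of `{x, y, z, w}` orients `(x, y)`, `(y, z)` and `(z, w)` alike, contrary to
`D(x,y;z,w) < 0`.
-/

/-- The second difference `D(a,b;c,d)` of `M` in rows `a, b` and columns `c, d`, signed so that the
a-Monge condition is its nonnegativity. -/
def crossDiff {ι : Type*} (M : ι → ι → ℝ) (a b c d : ι) : ℝ :=
  M a c + M b d - M a d - M b c

/-- The rank function `r` sorts the principal submatrix of `M` on `T` into a-Monge form. Ties are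
allowed: indices of equal rank may be listed in any order. -/
def RanksOn {ι : Type*} (M : ι → ι → ℝ) (r : ι → ℝ) (T : Set ι) : Prop :=
  ∀ ⦃a⦄, a ∈ T → ∀ ⦃b⦄, b ∈ T → ∀ ⦃c⦄, c ∈ T → ∀ ⦃d⦄, d ∈ T →
    r a ≤ r b → r c ≤ r d → 0 ≤ crossDiff M a b c d

/-- Some rank function sorts the principal submatrix of `M` on `T` into a-Monge form. This is the
order-free form of `PermAMonge`, stated for subsets of a fixed index type. -/
def Rankable {ι : Type*} (M : ι → ι → ℝ) (T : Set ι) : Prop :=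
  ∃ r : ι → ℝ, RanksOn M r T

/-- The candidate rank function placing `p` first and `q` last. The row part and the column part are
added so that each breaks the ties of the other. -/
def pairRank {ι : Type*} (M : ι → ι → ℝ) (p q x : ι) : ℝ :=
  (M q x - M p x) + (M x q - M x p)

section

variable {ι κ : Type*} {M : ι → ι → ℝ} {r ρ : ι → ℝ} {T : Set ι} {a b c d p q : ι}

theorem crossDiff_swap_rows (M : ι → ι → ℝ) (a b c d : ι) :
    crossDiff M b a c d = -crossDiff M a b c d := by
  simp only [crossDiff]
  ring

theorem crossDiff_swap_cols (M : ι → ι → ℝ) (a b c d : ι) :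
    crossDiff M a b d c = -crossDiff M a b c d := by
  simp only [crossDiff]
  ring

theorem crossDiff_add_rows (M : ι → ι → ℝ) (a b c x y : ι) :
    crossDiff M a b x y + crossDiff M b c x y = crossDiff M a c x y := by
  simp only [crossDiff]
  ring

theorem crossDiff_add_cols (M : ι → ι → ℝ) (a b x y z : ι) :
    crossDiff M a b x y + crossDiff M a b y z = crossDiff M a b x z := by
  simp only [crossDiff]
  ring

theorem crossDiff_transpose (M : ι → ι → ℝ) (a b c d : ι) :
    crossDiff (Function.swap M) a b c d = crossDiff M c d a b := by
  simp only [crossDiff, Function.swap]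
  ring

theorem pairRank_sub_pairRank (M : ι → ι → ℝ) (p q x y : ι) :
    pairRank M p q y - pairRank M p q x = crossDiff M p q x y + crossDiff M x y p q := by
  simp only [pairRank, crossDiff]
  ring

theorem pairRank_transpose (M : ι → ι → ℝ) (p q : ι) :
    pairRank (Function.swap M) p q = pairRank M p q := by
  funext x
  simp only [pairRank, Function.swap]
  ring

namespace RanksOn

theorem transpose (hr : RanksOn M r T) : RanksOn (Function.swap M) r T := by
  intro a ha b hb c hc d hd hab hcd
  rw [crossDiff_transpose]
  exact hr hc hd ha hb hcd hab

theorem neg (hr : RanksOn M r T) : RanksOn M (-r) T := by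
  intro a ha b hb c hc d hd hab hcd
  have := hr hb ha hd hc (neg_le_neg_iff.1 hab) (neg_le_neg_iff.1 hcd)
  rwa [crossDiff_swap_rows, crossDiff_swap_cols, neg_neg] at this

theorem crossDiff_nonneg (hr : RanksOn M r T) (hab : r a ≤ r b) (hcd : r c ≤ r d)
    (ha : a ∈ T := by simp) (hb : b ∈ T := by simp)
    (hc : c ∈ T := by simp) (hd : d ∈ T := by simp) : 0 ≤ crossDiff M a b c d :=
  hr ha hb hc hd hab hcd

theorem crossDiff_nonpos_of_rows_ge (hr : RanksOn M r T) (hba : r b ≤ r a) (hcd : r c ≤ r d)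
    (ha : a ∈ T := by simp) (hb : b ∈ T := by simp)
    (hc : c ∈ T := by simp) (hd : d ∈ T := by simp) : crossDiff M a b c d ≤ 0 := by
  linarith [hr hb ha hc hd hba hcd, crossDiff_swap_rows M a b c d]

theorem crossDiff_nonpos_of_cols_ge (hr : RanksOn M r T) (hab : r a ≤ r b) (hdc : r d ≤ r c)
    (ha : a ∈ T := by simp) (hb : b ∈ T := by simp)
    (hc : c ∈ T := by simp) (hd : d ∈ T := by simp) : crossDiff M a b c d ≤ 0 := by
  linarith [hr ha hb hd hc hab hdc, crossDiff_swap_cols M a b c d]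

theorem crossDiff_mono_cols (hr : RanksOn M r T) {c' d' : ι}
    (ha : a ∈ T) (hb : b ∈ T) (hc : c ∈ T) (hd : d ∈ T) (hc' : c' ∈ T) (hd' : d' ∈ T)
    (hab : r a ≤ r b) (hcc' : r c' ≤ r c) (hdd' : r d ≤ r d') :
    crossDiff M a b c d ≤ crossDiff M a b c' d' := by
  linarith [hr ha hb hc' hc hab hcc', hr ha hb hd hd' hab hdd',
    crossDiff_add_cols M a b c' c d, crossDiff_add_cols M a b c' d d']

theorem crossDiff_mono_rows (hr : RanksOn M r T) {a' b' : ι}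
    (ha : a ∈ T) (hb : b ∈ T) (hc : c ∈ T) (hd : d ∈ T) (ha' : a' ∈ T) (hb' : b' ∈ T)
    (haa' : r a' ≤ r a) (hbb' : r b ≤ r b') (hcd : r c ≤ r d) :
    crossDiff M a b c d ≤ crossDiff M a' b' c d := by
  simpa only [crossDiff_transpose] using
    hr.transpose.crossDiff_mono_cols hc hd ha hb ha' hb' hcd haa' hbb'

theorem crossDiff_le_crossDiff_extremal (hr : RanksOn M r T) (hT : T.Finite)
    (hp : p ∈ T) (hq : q ∈ T) (hpq : r p ≤ r q)
    (hmax : ∀ u ∈ T, ∀ v ∈ T, crossDiff M u v u v ≤ crossDiff M p q p q)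
    (ha : a ∈ T) (hb : b ∈ T) (hc : c ∈ T) (hd : d ∈ T) (hcd : r c ≤ r d) :
    crossDiff M a b c d ≤ crossDiff M p q c d := by
  obtain ⟨u, hu, u_le⟩ := T.exists_min_image r hT ⟨p, hp⟩
  obtain ⟨v, hv, le_v⟩ := T.exists_max_image r hT ⟨p, hp⟩
  calc crossDiff M a b c d
      ≤ crossDiff M u v c d :=
        hr.crossDiff_mono_rows ha hb hc hd hu hv (u_le a ha) (le_v b hb) hcd
    _ = crossDiff M u p c d + crossDiff M p q c d + crossDiff M q v c d := by
        rw [crossDiff_add_rows, crossDiff_add_rows]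
    _ ≤ crossDiff M u p u v + crossDiff M p q c d + crossDiff M q v u v := by
        gcongr ?_ + _ + ?_
        · exact hr.crossDiff_mono_cols hu hp hc hd hu hv (u_le p hp) (u_le c hc) (le_v d hd)
        · exact hr.crossDiff_mono_cols hq hv hc hd hu hv (le_v q hq) (u_le c hc) (le_v d hd)
    _ = crossDiff M u v u v - crossDiff M p q u v + crossDiff M p q c d := by
        rw [← crossDiff_add_rows M u p v, ← crossDiff_add_rows M p q v]
        ring
    _ ≤ crossDiff M p q p q - crossDiff M p q p q + crossDiff M p q c d := by
        gcongr ?_ - ?_ + _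
        · exact hmax u hu v hv
        · exact hr.crossDiff_mono_cols hp hq hp hq hu hv hpq (u_le p hp) (le_v q hq)
    _ = crossDiff M p q c d := by rw [sub_self, zero_add]

theorem crossDiff_nonneg_of_pairRank_le (hr : RanksOn M r T) (hT : T.Finite)
    (hp : p ∈ T) (hq : q ∈ T) (hpq : r p ≤ r q)
    (hmax : ∀ u ∈ T, ∀ v ∈ T, crossDiff M u v u v ≤ crossDiff M p q p q)
    (ha : a ∈ T) (hb : b ∈ T) (hc : c ∈ T) (hd : d ∈ T)
    (hcd : pairRank M p q c ≤ pairRank M p q d) (hdc : r d ≤ r c) :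
    0 ≤ crossDiff M a b c d := by
  have hrows : 0 ≤ crossDiff M d c p q := hr hd hc hp hq hdc hpq
  have hle : crossDiff M a b d c ≤ crossDiff M p q d c :=
    hr.crossDiff_le_crossDiff_extremal hT hp hq hpq hmax ha hb hd hc hdc
  linarith [pairRank_sub_pairRank M p q d c, crossDiff_swap_cols M a b c d]

end RanksOn

namespace Rankable

theorem transpose (hT : Rankable M T) : Rankable (Function.swap M) T :=
  hT.imp fun _ hr => hr.transpose

theorem exists_ranksOn_le (hT : Rankable M T) (a b : ι) : ∃ r, RanksOn M r T ∧ r a ≤ r b := by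
  obtain ⟨r, hr⟩ := hT
  rcases le_total (r a) (r b) with hab | hba
  · exact ⟨r, hr, hab⟩
  · exact ⟨-r, hr.neg, neg_le_neg hba⟩

theorem crossDiff_self_nonneg (hT : Rankable M T) (ha : a ∈ T) (hb : b ∈ T) :
    0 ≤ crossDiff M a b a b := by
  obtain ⟨r, hr, hab⟩ := hT.exists_ranksOn_le a b
  exact hr ha hb ha hb hab hab

theorem ranksOn_pairRank (h : Rankable M T) (hT : T.Finite) (hp : p ∈ T) (hq : q ∈ T)
    (hmax : ∀ u ∈ T, ∀ v ∈ T, crossDiff M u v u v ≤ crossDiff M p q p q) :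
    RanksOn M (pairRank M p q) T := by
  intro a ha b hb c hc d hd hab hcd
  obtain ⟨r, hr, hpq⟩ := h.exists_ranksOn_le p q
  rcases le_total (r d) (r c) with hdc | hcd'
  · exact hr.crossDiff_nonneg_of_pairRank_le hT hp hq hpq hmax ha hb hc hd hcd hdc
  rcases le_total (r b) (r a) with hba | hab'
  · rw [← crossDiff_transpose]
    rw [← pairRank_transpose] at hab
    exact hr.transpose.crossDiff_nonneg_of_pairRank_le hT hp hq hpq
      (by simpa only [crossDiff_transpose] using hmax) hc hd ha hb hab hba
  · exact hr ha hb hc hd hab' hcd'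

theorem crossDiff_nonpos_of_crossDiff_neg {x y z : ι} (hT : Rankable M T)
    (hx : x ∈ T) (hy : y ∈ T) (hz : z ∈ T) (hneg : crossDiff M x y y z < 0) :
    crossDiff M y z x y ≤ 0 := by
  obtain ⟨r, hr, hxy⟩ := hT.exists_ranksOn_le x y
  have hzy : r z ≤ r y :=
    le_of_not_ge fun hyz => (hr hx hy hy hz hxy hyz).not_gt hneg
  exact hr.crossDiff_nonpos_of_rows_ge hzy hxy hy hz hx hy

theorem crossDiff_nonneg_of_overlap {x y z w : ι} (hT : Rankable M {x, y, z, w})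
    (hy : 0 ≤ crossDiff M x y y w) (hz : 0 ≤ crossDiff M x z z w) :
    0 ≤ crossDiff M x y z w := by
  by_contra! hneg
  have hxyz : 0 < crossDiff M x y y z := by linarith [crossDiff_add_cols M x y y z w]
  have hyzw : 0 < crossDiff M y z z w := by linarith [crossDiff_add_rows M x y z z w]
  obtain ⟨r, hr, hxy⟩ := hT.exists_ranksOn_le x y
  have hyz : r y ≤ r z :=
    le_of_not_ge fun hzy => (hr.crossDiff_nonpos_of_cols_ge hxy hzy).not_gt hxyz
  have hzw : r z ≤ r w :=
    le_of_not_ge fun hwz => (hr.crossDiff_nonpos_of_cols_ge hyz hwz).not_gt hyzw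
  exact (hr.crossDiff_nonneg hxy hzw).not_gt hneg

end Rankable

theorem ranksOn_univ_of_chains
    (hself : ∀ x y, 0 ≤ crossDiff M x y x y)
    (htriple : ∀ x y z, ρ x ≤ ρ y → ρ y ≤ ρ z →
      0 ≤ crossDiff M x y y z ∧ 0 ≤ crossDiff M y z x y)
    (hquad : ∀ x y z w, ρ x ≤ ρ y → ρ y ≤ ρ z → ρ z ≤ ρ w →
      0 ≤ crossDiff M x y z w ∧ 0 ≤ crossDiff M z w x y) :
    RanksOn M ρ Set.univ := by
  intro a _ b _ c _ d _ hab hcd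
  wlog hac : ρ a ≤ ρ c generalizing M a b c d
  · rw [← crossDiff_transpose]
    exact this (by simpa only [crossDiff_transpose] using hself)
      (by simpa only [crossDiff_transpose, and_comm] using htriple)
      (by simpa only [crossDiff_transpose, and_comm] using hquad)
      (Set.mem_univ c) (Set.mem_univ d) (Set.mem_univ a) (Set.mem_univ b) hcd hab
      (le_of_not_ge hac)
  rcases le_total (ρ b) (ρ c) with hbc | hcb
  · exact (hquad a b c d hab hbc hcd).1
  have hacd := (htriple a c d hac hcd).1
  rw [← crossDiff_add_rows M a c b]
  refine add_nonneg hacd ?_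
  rcases le_total (ρ b) (ρ d) with hbd | hdb
  · rw [← crossDiff_add_cols M c b c b d]
    exact add_nonneg (hself c b) (htriple c b d hcb hbd).1
  · rw [← crossDiff_add_rows M c d b]
    exact add_nonneg (hself c d) (htriple c d b hcd hdb).2

/-- The rank function `ρ` puts `p` first and `q` last and sorts every principal submatrix on
`{p, q, x, y}`, while all principal submatrices of size at most four are rankable. The point of the
notion is that `ρ` then sorts the whole of `M`. -/
structure IsAnchoredRank (M : ι → ι → ℝ) (ρ : ι → ℝ) (p q : ι) : Prop where
  rankable (a b c d : ι) : Rankable M {a, b, c, d}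
  ranksOn (x y : ι) : RanksOn M ρ {p, q, x, y}
  first_le (x : ι) : ρ p ≤ ρ x
  le_last (x : ι) : ρ x ≤ ρ q

namespace IsAnchoredRank

theorem transpose (h : IsAnchoredRank M ρ p q) : IsAnchoredRank (Function.swap M) ρ p q where
  rankable a b c d := (h.rankable a b c d).transpose
  ranksOn x y := (h.ranksOn x y).transpose
  first_le := h.first_le
  le_last := h.le_last

theorem neg (h : IsAnchoredRank M ρ p q) : IsAnchoredRank M (-ρ) q p where
  rankable := h.rankable
  ranksOn x y := Set.insert_comm p q {x, y} ▸ (h.ranksOn x y).neg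
  first_le x := neg_le_neg (h.le_last x)
  le_last x := neg_le_neg (h.first_le x)

variable {x y z w : ι}

theorem crossDiff_left_nonpos_of_neg (h : IsAnchoredRank M ρ p q) (hxy : ρ x ≤ ρ y)
    (hyz : ρ y ≤ ρ z) (hneg : crossDiff M x y y z < 0) : crossDiff M x y x y ≤ 0 := by
  have hpx := h.first_le x
  have hpy := h.first_le y
  have hpx_xy : 0 ≤ crossDiff M p x x y := (h.ranksOn x y).crossDiff_nonneg hpx hxy
  have hpx_py : 0 ≤ crossDiff M p x p y := (h.ranksOn x y).crossDiff_nonneg hpx hpy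
  have hxy_px : 0 ≤ crossDiff M x y p x := (h.ranksOn x y).crossDiff_nonneg hxy hpx
  have hpy_yz : 0 ≤ crossDiff M p y y z := (h.ranksOn y z).crossDiff_nonneg hpy hyz
  have hpx_yz : 0 < crossDiff M p x y z := by linarith [crossDiff_add_rows M p x y y z]
  obtain ⟨r, hr, rxy⟩ := (h.rankable p x y z).exists_ranksOn_le x y
  rcases le_total (r y) (r p) with ryp | rpy
  · have hpy_xy : crossDiff M p y x y ≤ 0 := hr.crossDiff_nonpos_of_rows_ge ryp rxy
    linarith [crossDiff_add_rows M p x y x y]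
  have rzy : r z ≤ r y :=
    le_of_not_ge fun ryz => (hr.crossDiff_nonneg rxy ryz).not_gt hneg
  have rxp : r x ≤ r p :=
    le_of_not_ge fun rpx => (hr.crossDiff_nonpos_of_cols_ge rpx rzy).not_gt hpx_yz
  have hpx_pz : 0 < crossDiff M p x p z := by linarith [crossDiff_add_cols M p x p y z]
  have rzp : r z ≤ r p :=
    le_of_not_ge fun rpz => (hr.crossDiff_nonpos_of_rows_ge rxp rpz).not_gt hpx_pz
  have hpy_pz : crossDiff M p y p z ≤ 0 := hr.crossDiff_nonpos_of_cols_ge rpy rzp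
  have hpy_py : crossDiff M p y p y ≤ 0 := by linarith [crossDiff_add_cols M p y p y z]
  linarith [crossDiff_add_rows M p x y p y, crossDiff_add_cols M x y p x y]

theorem crossDiff_right_nonpos_of_neg (h : IsAnchoredRank M ρ p q) (hxy : ρ x ≤ ρ y)
    (hyz : ρ y ≤ ρ z) (hneg : crossDiff M x y y z < 0) : crossDiff M y z y z ≤ 0 := by
  have hrev (a b c d : ι) : crossDiff (Function.swap M) b a d c = crossDiff M c d a b := by
    rw [crossDiff_swap_rows, crossDiff_swap_cols, neg_neg, crossDiff_transpose]
  simpa only [hrev] using h.transpose.neg.crossDiff_left_nonpos_of_neg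
    (neg_le_neg hyz) (neg_le_neg hxy) (by rwa [hrev])

theorem crossDiff_triple_nonneg (h : IsAnchoredRank M ρ p q) (hxy : ρ x ≤ ρ y) (hyz : ρ y ≤ ρ z) :
    0 ≤ crossDiff M x y y z := by
  by_contra! hneg
  have hxy_xy := h.crossDiff_left_nonpos_of_neg hxy hyz hneg
  have hyz_yz := h.crossDiff_right_nonpos_of_neg hxy hyz hneg
  have hyz_xy : crossDiff M y z x y ≤ 0 :=
    (h.rankable x y z z).crossDiff_nonpos_of_crossDiff_neg (by simp) (by simp) (by simp) hneg
  have hxz_xz : 0 ≤ crossDiff M x z x z :=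
    (h.rankable x y z z).crossDiff_self_nonneg (by simp) (by simp)
  linarith [crossDiff_add_rows M x y z x z, crossDiff_add_cols M x y x y z,
    crossDiff_add_cols M y z x y z]

theorem crossDiff_quad_nonneg (h : IsAnchoredRank M ρ p q) (hxy : ρ x ≤ ρ y) (hyz : ρ y ≤ ρ z)
    (hzw : ρ z ≤ ρ w) : 0 ≤ crossDiff M x y z w :=
  (h.rankable x y z w).crossDiff_nonneg_of_overlap
    (h.crossDiff_triple_nonneg hxy (hyz.trans hzw)) (h.crossDiff_triple_nonneg (hxy.trans hyz) hzw)

theorem ranksOn_univ (h : IsAnchoredRank M ρ p q) : RanksOn M ρ Set.univ := by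
  refine ranksOn_univ_of_chains
    (fun x y => (h.rankable x y y y).crossDiff_self_nonneg (by simp) (by simp))
    (fun x y z hxy hyz => ⟨h.crossDiff_triple_nonneg hxy hyz, ?_⟩)
    (fun x y z w hxy hyz hzw => ⟨h.crossDiff_quad_nonneg hxy hyz hzw, ?_⟩) <;>
    rw [← crossDiff_transpose]
  · exact h.transpose.crossDiff_triple_nonneg hxy hyz
  · exact h.transpose.crossDiff_quad_nonneg hxy hyz hzw

end IsAnchoredRank

theorem isAnchoredRank_pairRank (h : ∀ a b c d, Rankable M {a, b, c, d})
    (hmax : ∀ u v, crossDiff M u v u v ≤ crossDiff M p q p q) :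
    IsAnchoredRank M (pairRank M p q) p q where
  rankable := h
  ranksOn x y := (h p q x y).ranksOn_pairRank (Set.toFinite _) (by simp) (by simp)
    fun u _ v _ => hmax u v
  first_le x := by
    have hself : 0 ≤ crossDiff M x p x p := (h x p p p).crossDiff_self_nonneg (by simp) (by simp)
    linarith [hmax x q, pairRank_sub_pairRank M p q x p, crossDiff_add_rows M x p q x q,
      crossDiff_add_cols M x p x p q, crossDiff_add_cols M p q x p q]
  le_last x := by
    have hself : 0 ≤ crossDiff M q x q x := (h q x x x).crossDiff_self_nonneg (by simp) (by simp)
    linarith [hmax p x, pairRank_sub_pairRank M p q q x, crossDiff_add_rows M p q x p x,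
      crossDiff_add_cols M p q p q x, crossDiff_add_cols M q x p q x]

theorem rankable_univ_of_forall_quadruple [Finite ι] (h : ∀ a b c d, Rankable M {a, b, c, d}) :
    Rankable M Set.univ := by
  cases isEmpty_or_nonempty ι
  · exact ⟨0, fun a => isEmptyElim a⟩
  obtain ⟨⟨p, q⟩, hmax⟩ := Finite.exists_max fun uv : ι × ι => crossDiff M uv.1 uv.2 uv.1 uv.2
  exact ⟨_, (isAnchoredRank_pairRank h fun u v => hmax (u, v)).ranksOn_univ⟩

theorem AMonge.crossDiff_nonneg [LinearOrder ι] (hM : AMonge M) (hab : a ≤ b) (hcd : c ≤ d) :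
    0 ≤ crossDiff M a b c d := by
  rcases hab.eq_or_lt with rfl | hab
  · simp [crossDiff]
  rcases hcd.eq_or_lt with rfl | hcd
  · simp [crossDiff]
  have := hM a b c d hab hcd
  simp only [crossDiff]
  linarith

theorem PermAMonge.rankable_range [LinearOrder κ] [Countable κ] {f : κ → ι}
    (hf : Function.Injective f) (h : PermAMonge fun i j => M (f i) (f j)) :
    Rankable M (Set.range f) := by
  obtain ⟨π, hπ⟩ := h
  obtain ⟨e⟩ := Order.embedding_from_countable_to_dense κ ℝ
  refine ⟨Function.extend f (fun i => e (π.symm i)) 0, ?_⟩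
  rintro _ ⟨a, rfl⟩ _ ⟨b, rfl⟩ _ ⟨c, rfl⟩ _ ⟨d, rfl⟩ hab hcd
  simp only [hf.extend_apply, e.le_iff_le] at hab hcd
  simpa only [crossDiff, Equiv.apply_symm_apply] using hπ.crossDiff_nonneg hab hcd

theorem exists_perm_monotone_comp [LinearOrder ι] [Finite ι] (r : ι → ℝ) :
    ∃ π : Equiv.Perm ι, Monotone (r ∘ π) := by
  cases nonempty_fintype ι
  let e : Fin (Fintype.card ι) ≃o ι := Fintype.orderIsoFinOfCardEq ι rfl
  exact ⟨(e.symm.toEquiv.trans (Tuple.sort (r ∘ e))).trans e.toEquiv,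
    (Tuple.monotone_sort (r ∘ e)).comp e.symm.monotone⟩

theorem Rankable.permAMonge [LinearOrder ι] [Finite ι] (h : Rankable M Set.univ) :
    PermAMonge M := by
  obtain ⟨r, hr⟩ := h
  obtain ⟨π, hπ⟩ := exists_perm_monotone_comp r
  refine ⟨π, fun i j k l hij hkl => ?_⟩
  have : 0 ≤ crossDiff M (π i) (π j) (π k) (π l) := hr.crossDiff_nonneg (hπ hij.le) (hπ hkl.le)
  simp only [crossDiff] at this
  linarith

theorem not_permuted_aMonge_small_submatrix_general [LinearOrder ι] [Finite ι]
    (M : ι → ι → ℝ) (h : ¬ PermAMonge M) :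
    ∃ B : Finset ι, B.card ≤ 4 ∧ ¬ PermAMonge (fun i j : ↥B => M i.1 j.1) := by
  by_contra! hB
  refine h (rankable_univ_of_forall_quadruple fun a b c d => ?_).permAMonge
  simpa only [Subtype.range_coe_subtype, Finset.setOfPred_mem, Finset.coe_insert,
    Finset.coe_singleton] using
    (hB {a, b, c, d} Finset.card_le_four).rankable_range Subtype.val_injective

end

/-- If an `n × n` real matrix is not a permuted a-Monge matrix,
then it has a principal submatrix of size at most `4` that is not a permuted
a-Monge matrix. -/
theorem not_permuted_aMonge_small_submatrix
    {n : ℕ} (M : Fin n → Fin n → ℝ) (h : ¬ PermAMonge M) :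
    ∃ B : Finset (Fin n), B.card ≤ 4 ∧
      ¬ PermAMonge (fun i j : ↥B => M i.1 j.1) :=
  not_permuted_aMonge_small_submatrix_general M h
end

section
/- Let U = {M_1,…,M_m} be a set of n×n real matrices such that no permutation of {0,…,n−1} is simultaneously an a-Monge permutation for all matrices in U. Then there exists a subset U' ⊆ U with |U'| ≤ 3 such that no permutation of {0,…,n−1} is simultaneously an a-Monge permutation for all matrices in U'. -/
/-!
Permutations are traded for linear orders on the index set. Say that `M` sees the rows `x`, `y` if
they do not differ by a constant, and likewise for columns. If `M` is a-Monge for an order and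
`M x w - M x z < M y w - M y z`, then `x < y ↔ z < w`. As any two matrices that see some rows also
see a common pair of rows, two orders for which both `M` and `N` are a-Monge agree on all pairs seen
by `M` or `N`, or on none of them.

So once a pair of rows seen by one matrix `M o` is oriented, the comparisons of the pairs seen by
each `M i` are forced, and a common order for `M o`, `M i`, `M j` shows that those forced by `M i`
and by `M j` do not conflict. Their union over all `i` is a strict weak order, and any linear order
extending it serves all the matrices.
-/

lemma exists_ne_and_ne {α β γ : Type*} {f : α → β} {g : α → γ} {x y z w : α}
    (hf : f x ≠ f y) (hg : g z ≠ g w) : ∃ a b, f a ≠ f b ∧ g a ≠ g b := by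
  by_contra! H
  have g_eq (t : α) : g t = g x := by
    by_cases ht : f t = f x
    · exact (H t y (ht ▸ hf)).trans (H x y hf).symm
    · exact H t x ht
  exact hg ((g_eq z).trans (g_eq w).symm)

section LinearOrders

variable {α : Type*}

/-- A linear order read backwards, as an order on the same type (unlike `OrderDual`). -/
abbrev reverseOrder (_ : LinearOrder α) : LinearOrder α :=
  LinearOrder.lift' (OrderDual.toDual : α → αᵒᵈ) OrderDual.toDual.injective

lemma lt_iff_lt_comm_of_ne {r s : LinearOrder α} {x y : α} (h : x ≠ y) :
    (r.lt x y ↔ s.lt x y) ↔ (r.lt y x ↔ s.lt y x) := by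
  have flip (q : LinearOrder α) : q.lt y x ↔ ¬ q.lt x y :=
    ⟨fun hyx ↦ hyx.not_gt, fun hxy ↦ lt_of_le_of_ne (le_of_not_gt hxy) h.symm⟩
  rw [flip r, flip s, not_iff_not]

lemma exists_lt_of_ne {x y : α} {P : LinearOrder α → Prop} (hP : ∃ r, P r)
    (hrev : ∀ r, P r → P (reverseOrder r)) (h : x ≠ y) : ∃ r, P r ∧ r.lt x y := by
  obtain ⟨r, hr⟩ := hP
  rcases lt_or_gt_of_ne h with hlt | hgt
  · exact ⟨r, hr, hlt⟩
  · exact ⟨reverseOrder r, hrev r hr, hgt⟩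

lemma exists_linearOrder_lt_of_strictWeakOrder {R : α → α → Prop}
    (asymm : ∀ x y, R x y → ¬ R y x) (lt_or_lt : ∀ x y, R x y → ∀ t, R x t ∨ R t y) :
    ∃ s : LinearOrder α, ∀ x y, R x y → s.lt x y := by
  have : IsStrictOrder α R :=
    { irrefl := fun x hx ↦ asymm x x hx hx
      trans := fun x y z hxy hyz ↦ (lt_or_lt x y hxy z).resolve_right (asymm y z hyz) }
  let _ : PartialOrder α := partialOrderOfSO R
  have inj : Function.Injective (toLinearExtension : α → LinearExtension α) := fun _ _ ↦ id
  exact ⟨LinearOrder.lift' toLinearExtension inj, fun x y hxy ↦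
    toLinearExtension.monotone.strictMono_of_injective inj hxy⟩

lemma exists_equiv_forall_lt_iff_lt {ι κ : Type*} [LinearOrder ι] [Finite ι] [LinearOrder κ]
    (e : ι ≃ κ) : ∃ f : ι ≃ κ, ∀ i j, f i < f j ↔ i < j := by
  have := Fintype.ofFinite ι
  have := Fintype.ofEquiv ι e
  let f : ι ≃o κ := (Fintype.orderIsoFinOfCardEq ι rfl).symm.trans
    (Fintype.orderIsoFinOfCardEq κ (Fintype.card_congr e).symm)
  exact ⟨f.toEquiv, fun _ _ ↦ f.lt_iff_lt⟩

end LinearOrders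

section MongeOrders

variable {α : Type*} {M N : α → α → ℝ} {x y z w : α}

/-- The comparisons that `M` forces between rows: by the a-Monge property, a row with a larger
difference `M · w - M · z` for some `z < w` must come later. -/
def RowLT [LinearOrder α] (M : α → α → ℝ) (x y : α) : Prop :=
  ∃ z w, z < w ∧ M x w - M x z < M y w - M y z

/-- The comparisons that `M` forces between indices, used as rows or as columns. -/
def ForcedLT [LinearOrder α] (M : α → α → ℝ) (x y : α) : Prop :=
  RowLT M x y ∨ RowLT (Function.swap M) x y

section OneOrder

variable {r : LinearOrder α}

lemma AMonge.of_le (hM : AMonge M) (hxy : x ≤ y) (hzw : z ≤ w) :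
    M x w + M y z ≤ M x z + M y w := by
  rcases hxy.eq_or_lt with rfl | hxy
  · rw [add_comm]
  rcases hzw.eq_or_lt with rfl | hzw
  · rfl
  exact hM x y z w hxy hzw

lemma AMonge.swap (hM : AMonge M) : AMonge (Function.swap M) := fun i j k l hij hkl ↦ by
  simpa only [Function.swap, add_comm (M l i)] using hM k l i j hkl hij

lemma AMonge.reverseOrder (hM : AMonge M) : @AMonge α (reverseOrder r) M :=
  fun i j k l hij hkl ↦ by simpa only [add_comm] using hM j i l k hij hkl

lemma AMonge.lt_iff_lt (hM : AMonge M) (h : M x w - M x z < M y w - M y z) :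
    x < y ↔ z < w := by
  constructor <;> intro hlt <;> by_contra! hle
  · linarith [hM.of_le hlt.le hle]
  · linarith [hM.of_le hle hlt.le]

lemma AMonge.lt_of_rowLT (hM : AMonge M) : RowLT M x y → x < y := fun ⟨_, _, hzw, h⟩ ↦
  (hM.lt_iff_lt h).2 hzw

lemma AMonge.lt_of_forcedLT (hM : AMonge M) (h : ForcedLT M x y) : x < y :=
  h.elim hM.lt_of_rowLT hM.swap.lt_of_rowLT

lemma RowLT.lt_or_lt (h : RowLT M x y) (t : α) : RowLT M x t ∨ RowLT M t y := by
  obtain ⟨z, w, hzw, h⟩ := h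
  rcases lt_or_ge (M x w - M x z) (M t w - M t z) with hxt | htx
  · exact .inl ⟨z, w, hzw, hxt⟩
  · exact .inr ⟨z, w, hzw, htx.trans_lt h⟩

lemma ForcedLT.lt_or_lt (h : ForcedLT M x y) (t : α) : ForcedLT M x t ∨ ForcedLT M t y :=
  h.elim (fun h ↦ (h.lt_or_lt t).imp .inl .inl) (fun h ↦ (h.lt_or_lt t).imp .inr .inr)

end OneOrder

section TwoOrders

variable {r s : LinearOrder α}

lemma AMonge.agree_rows_iff_agree_cols (hr : @AMonge α r M) (hs : @AMonge α s M)
    (h : M x w - M x z ≠ M y w - M y z) :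
    (r.lt x y ↔ s.lt x y) ↔ (r.lt z w ↔ s.lt z w) := by
  rcases h.lt_or_gt with hlt | hgt
  · exact iff_congr (hr.lt_iff_lt hlt) (hs.lt_iff_lt hlt)
  · have hxy : x ≠ y := fun hxy ↦ h (by rw [hxy])
    exact (lt_iff_lt_comm_of_ne hxy).trans (iff_congr (hr.lt_iff_lt hgt) (hs.lt_iff_lt hgt))

lemma AMonge.agree_rows_iff_agree_rows (hrM : @AMonge α r M) (hsM : @AMonge α s M)
    (hrN : @AMonge α r N) (hsN : @AMonge α s N) {a b c d : α}
    (hM : M a d - M a c ≠ M b d - M b c) (hN : N x w - N x z ≠ N y w - N y z) :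
    (r.lt a b ↔ s.lt a b) ↔ (r.lt x y ↔ s.lt x y) := by
  obtain ⟨u, v, huvM, huvN⟩ :=
    exists_ne_and_ne (f := fun t ↦ M t d - M t c) (g := fun t ↦ N t w - N t z) hM hN
  calc (r.lt a b ↔ s.lt a b)
    _ ↔ (r.lt c d ↔ s.lt c d) := hrM.agree_rows_iff_agree_cols hsM hM
    _ ↔ (r.lt u v ↔ s.lt u v) := (hrM.agree_rows_iff_agree_cols hsM huvM).symm
    _ ↔ (r.lt z w ↔ s.lt z w) := hrN.agree_rows_iff_agree_cols hsN huvN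
    _ ↔ (r.lt x y ↔ s.lt x y) := (hrN.agree_rows_iff_agree_cols hsN hN).symm

lemma AMonge.lt_of_forcedLT_of_agree (hrM : @AMonge α r M) (hsM : @AMonge α s M)
    (hrN : @AMonge α r N) (hsN : @AMonge α s N) {a b c d : α}
    (hM : M a d - M a c ≠ M b d - M b c) (hab : r.lt a b ↔ s.lt a b)
    (h : @ForcedLT α r N x y) : s.lt x y := by
  have hxy : r.lt x y := hrN.lt_of_forcedLT h
  refine Iff.mp ?_ hxy
  rcases h with ⟨z, w, -, hN⟩ | ⟨z, w, -, hN⟩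
  · exact (hrM.agree_rows_iff_agree_rows hsM hrN hsN hM hN.ne).1 hab
  · exact (hrM.agree_rows_iff_agree_rows hsM hrN.swap hsN.swap hM hN.ne).1 hab

lemma AMonge.of_forcedLT_imp_lt (hr : @AMonge α r M)
    (hs : ∀ x y, @ForcedLT α r M x y → s.lt x y) : @AMonge α s M := by
  intro i j k l hij hkl
  by_contra! hlt
  have hrow : M j l - M j k < M i l - M i k := by linarith
  have hcol : M j l - M i l < M j k - M i k := by linarith
  have hlk : r.le l k := @le_of_not_gt α r _ _ fun h ↦
    (hs j i (.inl ⟨k, l, h, hrow⟩)).not_gt hij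
  have hji : r.le j i := @le_of_not_gt α r _ _ fun h ↦
    (hs l k (.inr ⟨i, j, h, hcol⟩)).not_gt hkl
  linarith [hr.of_le hji hlk]

end TwoOrders

end MongeOrders

theorem no_common_aMonge_perm_three_witness_general {κ α : Type*} (M : κ → α → α → ℝ)
    (h : ¬ ∃ r : LinearOrder α, ∀ i, @AMonge α r (M i)) :
    ∃ S : Finset κ, S.card ≤ 3 ∧ ¬ ∃ r : LinearOrder α, ∀ i ∈ S, @AMonge α r (M i) := by
  classical
  by_contra! H
  by_cases flat : ∀ o a b c d, M o a d - M o a c = M o b d - M o b c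
  · obtain ⟨r, -⟩ := H ∅ (by simp)
    exact h ⟨r, fun o a b c d _ _ ↦ by linarith [flat o a b c d]⟩
  push Not at flat
  obtain ⟨o, a, b, c, d, ho⟩ := flat
  have common (i j : κ) : ∃ r : LinearOrder α,
      (@AMonge α r (M o) ∧ @AMonge α r (M i) ∧ @AMonge α r (M j)) ∧ r.lt a b :=
    exists_lt_of_ne (by simpa using H {o, i, j} Finset.card_le_three)
      (fun _ hr ↦ ⟨hr.1.reverseOrder, hr.2.1.reverseOrder, hr.2.2.reverseOrder⟩)
      fun hab ↦ ho (hab ▸ rfl)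
  choose r hr hrab using fun i ↦ common i i
  have asymm (x y : α) : (∃ i, @ForcedLT α (r i) (M i) x y) →
      ¬ ∃ i, @ForcedLT α (r i) (M i) y x := by
    rintro ⟨i, hxy⟩ ⟨j, hyx⟩
    obtain ⟨s, ⟨hso, hsi, hsj⟩, hsab⟩ := common i j
    exact lt_asymm
      ((hr i).1.lt_of_forcedLT_of_agree hso (hr i).2.1 hsi ho (iff_of_true (hrab i) hsab) hxy)
      ((hr j).1.lt_of_forcedLT_of_agree hso (hr j).2.1 hsj ho (iff_of_true (hrab j) hsab) hyx)
  obtain ⟨s, hs⟩ := exists_linearOrder_lt_of_strictWeakOrder asymm fun x y ⟨i, hxy⟩ t ↦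
    (hxy.lt_or_lt t).imp (⟨i, ·⟩) (⟨i, ·⟩)
  exact h ⟨s, fun i ↦ (hr i).2.1.of_forcedLT_imp_lt fun x y hxy ↦ hs x y ⟨i, hxy⟩⟩

section Permutations

variable {ι : Type*}

/-- The linear order on `ι` that lists the indices as `π i`, for `i` in increasing order; `M` is
a-Monge for it exactly if `π` is an a-Monge permutation for `M`. -/
abbrev permOrder [LinearOrder ι] (π : Equiv.Perm ι) : LinearOrder ι :=
  LinearOrder.lift' π.symm π.symm.injective

variable {q : LinearOrder ι}

lemma permOrder_lt_iff {π : Equiv.Perm ι} {i j : ι} :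
    (permOrder π).lt (π i) (π j) ↔ q.lt i j := by
  change π.symm (π i) < π.symm (π j) ↔ i < j
  simp only [Equiv.symm_apply_apply]

lemma aMonge_permOrder_iff (M : ι → ι → ℝ) (π : Equiv.Perm ι) :
    @AMonge ι (permOrder π) M ↔ AMonge (fun a b ↦ M (π a) (π b)) := by
  constructor
  · exact fun h i j k l hij hkl ↦ h _ _ _ _ (permOrder_lt_iff.2 hij) (permOrder_lt_iff.2 hkl)
  · intro h i j k l hij hkl
    simpa only [Equiv.apply_symm_apply] using h _ _ _ _ hij hkl

lemma permOrder_surjective [Finite ι] :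
    Function.Surjective (permOrder : Equiv.Perm ι → LinearOrder ι) := by
  intro r
  obtain ⟨π, hπ⟩ := @exists_equiv_forall_lt_iff_lt ι ι q _ r (Equiv.refl ι)
  exact ⟨π, LinearOrder.ext_lt <| π.surjective.forall₂.2 fun i j ↦
    permOrder_lt_iff.trans (hπ i j).symm⟩

end Permutations

/-- If no permutation of `{0,…,n−1}` is simultaneously an a-Monge
permutation for all matrices of a family `M₁,…,Mₘ`, then some subfamily of at most
`3` of the matrices already admits no common a-Monge permutation. -/
theorem no_common_aMonge_perm_three_witness
    {m n : ℕ} (M : Fin m → Fin n → Fin n → ℝ)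
    (h : ¬ ∃ π : Equiv.Perm (Fin n),
          ∀ i : Fin m, AMonge (fun a b => M i (π a) (π b))) :
    ∃ S : Finset (Fin m), S.card ≤ 3 ∧
      ¬ ∃ π : Equiv.Perm (Fin n),
          ∀ i ∈ S, AMonge (fun a b => M i (π a) (π b)) := by
  revert h
  simpa only [permOrder_surjective.exists, aMonge_permOrder_iff] using
    no_common_aMonge_perm_three_witness_general M
end

section
/- Let N be a 3×3 real matrix (indexed by {0,1,2}) such that Δ(i,j) := N(i,i) + N(j,j) − N(i,j) − N(j,i) = 0 for every pair of indices i, j. Then either N is not a permuted a-Monge matrix, or N is a sum matrix, i.e., there exist real vectors u, v with N(s,t) = u_s + v_t for all s, t. -/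
section MixedDiff

variable {α β G : Type*} [AddCommGroup G]

/-- The mixed second difference of `M` over the rows `i, j` and the columns `k, l`. It measures the
failure of `M` to be a sum matrix, and `Δ(i, j)` is `mixedDiff M i j i j`. -/
def mixedDiff (M : α → β → G) (i j : α) (k l : β) : G :=
  M i k + M j l - M i l - M j k

lemma mixedDiff_swap_rows (M : α → β → G) (i j : α) (k l : β) :
    mixedDiff M j i k l = -mixedDiff M i j k l := by
  unfold mixedDiff
  abel

lemma mixedDiff_swap_cols (M : α → β → G) (i j : α) (k l : β) :
    mixedDiff M i j l k = -mixedDiff M i j k l := by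
  unfold mixedDiff
  abel

lemma exists_eq_add_iff_mixedDiff_eq_zero {M : α → β → G} :
    (∃ (u : α → G) (v : β → G), ∀ s t, M s t = u s + v t) ↔
      ∀ i j k l, mixedDiff M i j k l = 0 := by
  constructor
  · rintro ⟨u, v, h⟩ i j k l
    simp only [mixedDiff, h]
    abel
  · intro h
    rcases isEmpty_or_nonempty α with _ | ⟨⟨a⟩⟩
    · exact ⟨0, 0, isEmptyElim⟩
    rcases isEmpty_or_nonempty β with _ | ⟨⟨b⟩⟩
    · exact ⟨0, 0, fun _ => isEmptyElim⟩
    refine ⟨fun s => M s b, fun t => M a t - M a b, fun s t => ?_⟩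
    calc
      M s t = mixedDiff M a s b t + (M s b + (M a t - M a b)) := by unfold mixedDiff; abel
      _ = M s b + (M a t - M a b) := by rw [h, zero_add]

end MixedDiff

section AMonge

variable {ι : Type*} [LinearOrder ι] {M : ι → ι → ℝ}

lemma AMonge.mixedDiff_nonneg (hM : AMonge M) {i j k l : ι} (hij : i ≤ j) (hkl : k ≤ l) :
    0 ≤ mixedDiff M i j k l := by
  unfold mixedDiff
  rcases hij.eq_or_lt with rfl | hij
  · linarith
  rcases hkl.eq_or_lt with rfl | hkl
  · linarith
  linarith [hM i j k l hij hkl]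

lemma AMonge.mixedDiff_mono (hM : AMonge M) {a b c d i j k l : ι}
    (hai : a ≤ i) (hij : i ≤ j) (hjb : j ≤ b) (hck : c ≤ k) (hkl : k ≤ l) (hld : l ≤ d) :
    mixedDiff M i j k l ≤ mixedDiff M a b c d := by
  have hcd : c ≤ d := hck.trans (hkl.trans hld)
  calc
    mixedDiff M i j k l
      ≤ mixedDiff M i j c k + mixedDiff M i j k l + mixedDiff M i j l d := by
        linarith [hM.mixedDiff_nonneg hij hck, hM.mixedDiff_nonneg hij hld]
    _ = mixedDiff M i j c d := by unfold mixedDiff; ring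
    _ ≤ mixedDiff M a i c d + mixedDiff M i j c d + mixedDiff M j b c d := by
        linarith [hM.mixedDiff_nonneg hai hcd, hM.mixedDiff_nonneg hjb hcd]
    _ = mixedDiff M a b c d := by unfold mixedDiff; ring

lemma AMonge.mixedDiff_eq_zero (hM : AMonge M) (hΔ : ∀ i j, mixedDiff M i j i j ≤ 0)
    (i j k l : ι) : mixedDiff M i j k l = 0 := by
  wlog hij : i ≤ j generalizing i j
  · rw [mixedDiff_swap_rows, this j i (le_of_not_ge hij), neg_zero]
  wlog hkl : k ≤ l generalizing k l
  · rw [mixedDiff_swap_cols, this l k (le_of_not_ge hkl), neg_zero]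
  refine le_antisymm ?_ (hM.mixedDiff_nonneg hij hkl)
  calc
    mixedDiff M i j k l ≤ mixedDiff M (min i k) (max j l) (min i k) (max j l) :=
      hM.mixedDiff_mono (min_le_left i k) hij (le_max_left j l)
        (min_le_right i k) hkl (le_max_right j l)
    _ ≤ 0 := hΔ _ _

lemma PermAMonge.mixedDiff_eq_zero (hM : PermAMonge M) (hΔ : ∀ i j, mixedDiff M i j i j ≤ 0)
    (i j k l : ι) : mixedDiff M i j k l = 0 := by
  obtain ⟨π, hπ⟩ := hM
  simpa [mixedDiff] using hπ.mixedDiff_eq_zero (fun i j => hΔ (π i) (π j))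
    (π.symm i) (π.symm j) (π.symm k) (π.symm l)

end AMonge

theorem zero_delta_bad_or_sum_general {ι : Type*} [LinearOrder ι] (N : ι → ι → ℝ)
    (hΔ : ∀ i j, N i i + N j j - N i j - N j i ≤ 0) :
    ¬ PermAMonge N ∨ ∃ u v : ι → ℝ, ∀ s t, N s t = u s + v t :=
  not_or_of_imp fun hN => exists_eq_add_iff_mixedDiff_eq_zero.mpr (hN.mixedDiff_eq_zero hΔ)

/-- If a 3×3 real matrix `N` satisfies
`Δ(i,j) = N i i + N j j − N i j − N j i = 0` for all `i, j`, then either `N` is not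
a permuted a-Monge matrix, or `N` is a sum matrix (`N s t = u s + v t`). -/
theorem zero_delta_bad_or_sum
    (N : Fin 3 → Fin 3 → ℝ)
    (hΔ : ∀ i j : Fin 3, N i i + N j j - N i j - N j i = 0) :
    ¬ PermAMonge N ∨ ∃ u v : Fin 3 → ℝ, ∀ s t, N s t = u s + v t :=
  zero_delta_bad_or_sum_general N fun i j => (hΔ i j).le
end
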